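/- Assume |μ|·√(kT/K) ≤ Γσ for every k ∈ {1,…,K}. Then U_1 ∩ W = U_1 ∩ V(U_1); consequently U_1 ∩ W ⊆ A(U_1 ∩ W), i.e., the modified uncertainty set U_1' := U_1 ∩ W gives rise to a worst-case risk measure satisfying the bounded (conditional) market risk property. -/

import Mathlib

open scoped BigOperators

/-- The length-`k` prefix of `w` belongs to the prefix set `U_{1:k}`
(only the first `k` coordinates of `w` are relevant). -/
def prefixMem {K : ℕ} (U : Set (Fin K → ℝ)) (k : ℕ) (w : ℕ → ℝ) : Prop :=
  ∃ r ∈ U, ∀ i : Fin K, (i : ℕ) < k → r i = w i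

/-- The one-step projection `U_{k+1}(w)` of `U` given the length-`k` prefix `w`. -/
def oneStep {K : ℕ} (U : Set (Fin K → ℝ)) (k : ℕ) (w : ℕ → ℝ) : Set ℝ :=
  {s | ∃ r ∈ U, (∀ i : Fin K, (i : ℕ) < k → r i = w i) ∧ ∀ h : k < K, r ⟨k, h⟩ = s}

/-- The game values `π^U_k(w)`, defined backward from `π^U_K = 0` by
`π^U_k(w) = inf_{ζ ∈ ℝ} sup_{s ∈ U_{k+1}(w)} (-ζ·s + π^U_{k+1}(w⌢s))`,
with values in the extended reals (the supremum over the empty set being `⊥`).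
Only the first `k` coordinates of `w` are relevant. -/
noncomputable def piVal {K : ℕ} (U : Set (Fin K → ℝ)) (k : ℕ) (w : ℕ → ℝ) : EReal :=
  if h : k < K then
    ⨅ ζ : ℝ, ⨆ s ∈ oneStep U k w,
      (((-ζ * s : ℝ) : EReal) + piVal U (k + 1) (Function.update w k s))
  else 0
  termination_by K - k
  decreasing_by omega

/-- A vector `r ∈ ℝ^K` seen as a prefix function `ℕ → ℝ` (padded with zeros). -/
def padR {K : ℕ} (r : Fin K → ℝ) : ℕ → ℝ := fun i => if h : i < K then r ⟨i, h⟩ else 0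

/-- `r_{1:k}⌢0_{K-k}`: the first `k` coordinates of `r` padded with zeros. -/
def zeroPad {K : ℕ} (r : Fin K → ℝ) (k : ℕ) : Fin K → ℝ :=
  fun i => if (i : ℕ) < k then r i else 0

/-- A length-`k` prefix `w : ℕ → ℝ` padded with zeros into a vector of `ℝ^K`. -/
def padPrefix (K : ℕ) (w : ℕ → ℝ) (k : ℕ) : Fin K → ℝ :=
  fun i => if (i : ℕ) < k then w i else 0

/-- `A(U)`: the set of returns with bounded conditional market risk. -/
def Aset {K : ℕ} (U : Set (Fin K → ℝ)) : Set (Fin K → ℝ) :=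
  {r | ∀ k : ℕ, k < K → ¬ prefixMem U k (padR r) ∨
    ((⊥ : EReal) < piVal U k (padR r) ∧ piVal U k (padR r) ≤ 0)}

/-- `V(U)`: the set of returns all of whose zero-padded prefixes remain in `U`
(whenever the prefix is realizable in `U`), together with `0 ∈ U`. -/
def Vset {K : ℕ} (U : Set (Fin K → ℝ)) : Set (Fin K → ℝ) :=
  {r | (0 : Fin K → ℝ) ∈ U ∧
    ∀ k : ℕ, 1 ≤ k → k ≤ K - 1 → zeroPad r k ∈ U ∨ ¬ prefixMem U k (padR r)}

theorem zp_sum {K : ℕ} (r : Fin K → ℝ) (k j : ℕ) :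
    ∑ i ∈ Finset.univ.filter (fun i : Fin K => (i : ℕ) < j), Real.log (1 + zeroPad r k i)
      = ∑ i ∈ Finset.univ.filter (fun i : Fin K => (i : ℕ) < min j k), Real.log (1 + r i) := by
  rw [Finset.sum_filter, Finset.sum_filter]
  refine Finset.sum_congr rfl fun i _ => ?_
  unfold zeroPad
  by_cases h1 : (i : ℕ) < j <;> by_cases h2 : (i : ℕ) < k <;> simp [h1, h2]

theorem piVal_le {K : ℕ} (U : Set (Fin K → ℝ)) (n : ℕ) :
    ∀ (k : ℕ) (w : ℕ → ℝ), K - k = n → piVal U k w ≤ 0 := by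
  induction n with
  | zero =>
    intro k w h
    rw [piVal, dif_neg (by omega)]
  | succ n ih =>
    intro k w h
    rw [piVal, dif_pos (by omega)]
    refine iInf_le_of_le 0 (iSup₂_le fun s _ => ?_)
    simpa using ih (k + 1) (Function.update w k s) (by omega)

theorem piVal_ge {K : ℕ} (U : Set (Fin K → ℝ)) (hU : ∀ r ∈ U, ∀ k, zeroPad r k ∈ U) (n : ℕ) :
    ∀ (k : ℕ) (w : ℕ → ℝ), K - k = n → prefixMem U k w → 0 ≤ piVal U k w := by
  induction n with
  | zero =>
    intro k w h _
    rw [piVal, dif_neg (by omega)]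
  | succ n ih =>
    intro k w h hp
    obtain ⟨r, hr, hrw⟩ := hp
    rw [piVal, dif_pos (by omega)]
    refine le_iInf fun ζ => ?_
    have h0 : (0 : ℝ) ∈ oneStep U k w := by
      refine ⟨zeroPad r k, hU r hr k, fun i hi => ?_, fun h => ?_⟩
      · simp [zeroPad, hi, hrw i hi]
      · simp [zeroPad]
    refine le_iSup₂_of_le 0 h0 ?_
    have := ih (k + 1) (Function.update w k 0) (by omega) ⟨zeroPad r k, hU r hr k, fun i hi => ?_⟩
    · simpa using this
    · by_cases h2 : (i : ℕ) = k
      · simp [zeroPad, h2]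
      · have h3 : (i : ℕ) < k := by omega
        simp [zeroPad, h2, h3, hrw i h3]

/-- under the condition `|μ|·√(kT/K) ≤ Γσ` for all `k ∈ {1,…,K}`, the
modified uncertainty set `U_1' := U_1 ∩ W` coincides with `U_1 ∩ V(U_1)`, and
consequently `U_1 ∩ W ⊆ A(U_1 ∩ W)`: the associated worst-case risk measure satisfies
the bounded (conditional) market risk property. -/
theorem stmt_13 (K : ℕ) (hK : 1 ≤ K) (T μ σ Γ : ℝ)
    (hT : 0 < T) (hσ : 0 < σ) (hΓ : 0 ≤ Γ)
    (hcond : ∀ k : ℕ, 1 ≤ k → k ≤ K → |μ| * Real.sqrt (k * T / K) ≤ Γ * σ)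
    (U1 W : Set (Fin K → ℝ))
    (hU1 : U1 = {r | (∀ i : Fin K, -1 < r i) ∧ ∀ k : ℕ, 1 ≤ k → k ≤ K →
      |(∑ i ∈ Finset.univ.filter (fun i : Fin K => (i : ℕ) < k), Real.log (1 + r i))
          - μ * k * T / K|
        ≤ Γ * σ * Real.sqrt (k * T / K)})
    (hW : W = {r | (∀ i : Fin K, -1 < r i) ∧ ∀ k k' : ℕ, 1 ≤ k → k < k' → k' ≤ K →
      |(∑ i ∈ Finset.univ.filter (fun i : Fin K => (i : ℕ) < k), Real.log (1 + r i))
          - μ * k' * T / K|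
        ≤ Γ * σ * Real.sqrt (k' * T / K)}) :
    U1 ∩ W = U1 ∩ Vset U1 ∧ U1 ∩ W ⊆ Aset (U1 ∩ W) := by
  have hKpos : (0 : ℝ) < K := by exact_mod_cast hK
  have hz : ∀ k : ℕ, 1 ≤ k → k ≤ K → |0 - μ * k * T / K| ≤ Γ * σ * Real.sqrt (k * T / K) := by
    intro k h1 h2
    have hnn : (0 : ℝ) ≤ k * T / K := by positivity
    have h3 := mul_le_mul_of_nonneg_right (hcond k h1 h2) (Real.sqrt_nonneg (k * T / K))
    rw [mul_assoc, Real.mul_self_sqrt hnn] at h3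
    rw [zero_sub, abs_neg]
    have : μ * k * T / K = μ * (k * T / K) := by ring
    rw [this, abs_mul, abs_of_nonneg hnn]
    exact h3
  have hgt : ∀ (r : Fin K → ℝ) (k : ℕ), (∀ i, -1 < r i) → ∀ i, -1 < zeroPad r k i := by
    intro r k h i
    unfold zeroPad
    split_ifs
    · exact h i
    · norm_num
  have h0 : (0 : Fin K → ℝ) ∈ U1 := by
    rw [hU1]
    refine ⟨fun i => by simp, fun k h1 h2 => ?_⟩
    simpa using hz k h1 h2
  have hzU : ∀ r ∈ U1 ∩ W, ∀ k, zeroPad r k ∈ U1 ∩ W := by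
    rintro r ⟨hr1, hr2⟩ k
    rw [hU1] at hr1
    rw [hW] at hr2
    obtain ⟨hp, hr1⟩ := hr1
    obtain ⟨-, hr2⟩ := hr2
    rw [hU1, hW]
    refine ⟨⟨hgt r k hp, fun j h1 h2 => ?_⟩, ⟨hgt r k hp, fun j j' h1 h2 h3 => ?_⟩⟩
    · rw [zp_sum]
      rcases Nat.eq_zero_or_pos k with rfl | hk
      · simpa using hz j h1 h2
      · rcases le_or_gt j k with h | h
        · rw [min_eq_left h]; exact hr1 j h1 h2
        · rw [min_eq_right h.le]; exact hr2 k j hk h h2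
    · rw [zp_sum]
      rcases Nat.eq_zero_or_pos k with rfl | hk
      · simpa using hz j' (by omega) h3
      · exact hr2 _ _ (by omega) (by omega) h3
  refine ⟨?_, ?_⟩
  · ext r
    constructor
    · intro hr
      exact ⟨hr.1, h0, fun k _ _ => Or.inl (hzU r hr k).1⟩
    · rintro ⟨hr, -, hv⟩
      refine ⟨hr, ?_⟩
      have hr' := hr
      rw [hU1] at hr'
      rw [hW]
      refine ⟨hr'.1, fun k k' h1 h2 h3 => ?_⟩
      rcases hv k h1 (by omega) with h | h
      · rw [hU1] at h
        have h4 := h.2 k' (by omega) h3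
        rwa [zp_sum, min_eq_right h2.le] at h4
      · exact absurd ⟨r, hr, fun i _ => by simp [padR]⟩ h
  · intro r hr k hk
    right
    refine ⟨lt_of_lt_of_le EReal.bot_lt_zero (piVal_ge _ hzU _ k _ rfl ⟨r, hr, fun i _ => by simp [padR]⟩),
      piVal_le _ _ k _ rfl⟩
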